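/- Let x be a random vector on ℝ^d with law N(0_d, Σ_x) and ε an independent random vector with law N(0_d, Σ_y), where Σ_x and Σ_y are positive definite, let A ∈ ℝ^{d×d}, and set y = A x + ε and D = (Aᵀ Σ_y⁻¹ A + Σ_x⁻¹)⁻¹ Aᵀ Σ_y⁻¹. Then the random vector x − D y is independent of y, and its law is the multivariate Gaussian N(0_d, (Aᵀ Σ_y⁻¹ A + Σ_x⁻¹)⁻¹). Consequently, the conditional distribution of x given y is N(D y, (Aᵀ Σ_y⁻¹ A + Σ_x⁻¹)⁻¹), and in particular E[x | y] = D y almost surely. -/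

import Mathlib

open MeasureTheory ProbabilityTheory Matrix

/-- Multivariate Gaussian measure `N(m, S)` on `ℝ^d = (Fin d → ℝ)`, defined by its density
with respect to Lebesgue measure (intended for positive definite covariance `S`). -/
noncomputable def mvGaussian (d : ℕ) (m : Fin d → ℝ) (S : Matrix (Fin d) (Fin d) ℝ) :
    Measure (Fin d → ℝ) :=
  volume.withDensity fun x =>
    ENNReal.ofReal ((2 * Real.pi) ^ (-(d : ℝ) / 2) * S.det ^ (-(1 : ℝ) / 2) *
      Real.exp (-((x - m) ⬝ᵥ (S⁻¹ *ᵥ (x - m))) / 2))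

/-!
As images of independent Gaussian vectors under a linear map, `x - D y` and `y` are jointly
Gaussian. The matrix `D` satisfies the normal equation `D Cov(y, y) = Cov(x, y)`, which says that
`x - D y` and `y` are uncorrelated, hence independent, and it turns the covariance matrix of
`x - D y` into `Sx - D A Sx = (Aᵀ Sy⁻¹ A + Sx⁻¹)⁻¹`. Since `x = (x - D y) + D y`, conditioning on
`y` only translates the law of `x - D y` by `D y`.
-/

lemma map_withDensity_comp {α β : Type*} [MeasurableSpace α] [MeasurableSpace β] (μ : Measure α)
    {g : α → β} (hg : Measurable g) {f : β → ENNReal} (hf : Measurable f) :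
    (μ.withDensity (f ∘ g)).map g = (μ.map g).withDensity f := by
  ext s hs
  rw [Measure.map_apply hg hs, withDensity_apply _ (hg hs), withDensity_apply _ hs,
    setLIntegral_map hs hf hg]
  rfl

lemma pi_withDensity_ofReal {ι : Type*} [Fintype ι] {E : ι → Type*} [∀ i, MeasurableSpace (E i)]
    (μ : ∀ i, Measure (E i)) [∀ i, SigmaFinite (μ i)] {f : ∀ i, E i → ℝ}
    (hf : ∀ i, Integrable (f i) (μ i)) (hf_nonneg : ∀ i, 0 ≤ f i) :
    Measure.pi (fun i => (μ i).withDensity fun t => ENNReal.ofReal (f i t)) =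
      (Measure.pi μ).withDensity fun u => ENNReal.ofReal (∏ i, f i (u i)) := by
  refine Measure.pi_eq fun s hs => ?_
  rw [withDensity_apply _ (MeasurableSet.univ_pi hs), Measure.restrict_pi_pi,
    ← ofReal_integral_eq_lintegral_ofReal (Integrable.fintype_prod_dep fun i => (hf i).restrict)
      (ae_of_all _ fun u => Finset.prod_nonneg fun i _ => hf_nonneg i (u i)),
    integral_fintype_prod_eq_prod f,
    ENNReal.ofReal_prod_of_nonneg fun i _ => integral_nonneg (hf_nonneg i)]
  refine Finset.prod_congr rfl fun i _ => ?_
  rw [withDensity_apply _ (hs i),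
    ofReal_integral_eq_lintegral_ofReal (hf i).restrict (ae_of_all _ (hf_nonneg i))]

lemma gaussian_ext_of_covariance_eval {ι : Type*} [Fintype ι] {μ ν : Measure (ι → ℝ)}
    [IsGaussian μ] [IsGaussian ν] (hmean : ∫ x, x ∂μ = ∫ x, x ∂ν)
    (hcov : ∀ i j, cov[fun x => x i, fun x => x j; μ] = cov[fun x => x i, fun x => x j; ν]) :
    μ = ν := by
  classical
  refine IsGaussian.ext_covarianceBilinDual hmean ?_
  have hcoord (L : StrongDual ℝ (ι → ℝ)) : ⇑L = fun x => ∑ i, L (Pi.single i 1) * x i := by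
    ext x
    conv_lhs => rw [pi_eq_sum_univ' x]
    simp [mul_comm]
  have hexpand (ρ : Measure (ι → ℝ)) [IsGaussian ρ] (L L' : StrongDual ℝ (ι → ℝ)) :
      cov[L, L'; ρ] = ∑ i, ∑ j, L' (Pi.single j 1) *
        (L (Pi.single i 1) * cov[fun x => x i, fun x => x j; ρ]) := by
    have heval (i : ι) : MemLp (fun x : ι → ℝ => x i) 2 ρ := IsGaussian.memLp_two_id.eval i
    conv_lhs => rw [hcoord L, hcoord L', covariance_fun_sum_fun_sum
      (fun i => (heval i).const_mul _) fun j => (heval j).const_mul _]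
    simp only [covariance_const_mul_left, covariance_const_mul_right]
  ext L L'
  rw [covarianceBilinDual_eq_covariance IsGaussian.memLp_two_id,
    covarianceBilinDual_eq_covariance IsGaussian.memLp_two_id, hexpand μ, hexpand ν]
  simp only [hcov]

@[fun_prop]
lemma measurable_mulVec {ι κ : Type*} [Finite ι] [Fintype κ] (A : Matrix ι κ ℝ) :
    Measurable (A *ᵥ · : (κ → ℝ) → ι → ℝ) :=
  Continuous.measurable (by fun_prop)

/-- The Lebesgue density of `mvGaussian d m S`. -/
noncomputable def mvGaussianPDFReal (d : ℕ) (m : Fin d → ℝ) (S : Matrix (Fin d) (Fin d) ℝ)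
    (x : Fin d → ℝ) : ℝ :=
  (2 * Real.pi) ^ (-(d : ℝ) / 2) * S.det ^ (-(1 : ℝ) / 2) *
    Real.exp (-((x - m) ⬝ᵥ (S⁻¹ *ᵥ (x - m))) / 2)

section mvGaussian

variable {d : ℕ} {S : Matrix (Fin d) (Fin d) ℝ}

lemma mvGaussian_eq_withDensity (m : Fin d → ℝ) (S : Matrix (Fin d) (Fin d) ℝ) :
    mvGaussian d m S = volume.withDensity fun x => ENNReal.ofReal (mvGaussianPDFReal d m S x) :=
  rfl

@[fun_prop]
lemma measurable_mvGaussianPDFReal (m : Fin d → ℝ) (S : Matrix (Fin d) (Fin d) ℝ) :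
    Measurable (mvGaussianPDFReal d m S) := by
  unfold mvGaussianPDFReal
  exact Continuous.measurable (by fun_prop)

lemma mvGaussian_zero_one (d : ℕ) :
    mvGaussian d 0 1 = Measure.pi fun _ : Fin d => gaussianReal 0 1 := by
  have h2π : (0 : ℝ) ≤ 2 * Real.pi := by positivity
  have hconst : (2 * Real.pi) ^ (-(d : ℝ) / 2) = (√(2 * Real.pi))⁻¹ ^ d := by
    rw [Real.sqrt_eq_rpow, ← Real.rpow_neg h2π, ← Real.rpow_natCast, ← Real.rpow_mul h2π]
    congr 1
    ring
  have hpdf (u : Fin d → ℝ) : mvGaussianPDFReal d 0 1 u = ∏ i, gaussianPDFReal 0 1 (u i) := by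
    simp only [mvGaussianPDFReal, gaussianPDFReal, Finset.prod_mul_distrib, ← Real.exp_sum, hconst]
    simp [dotProduct, neg_div, Finset.sum_div, pow_two]
  have hgaussian : gaussianReal 0 1 =
      (volume : Measure ℝ).withDensity fun t => ENNReal.ofReal (gaussianPDFReal 0 1 t) :=
    gaussianReal_of_var_ne_zero 0 one_ne_zero
  rw [hgaussian, pi_withDensity_ofReal _ (fun _ => integrable_gaussianPDFReal 0 1)
    (fun _ => gaussianPDFReal_nonneg 0 1), mvGaussian_eq_withDensity]
  simp only [hpdf]
  rfl

lemma map_add_right_mvGaussian (m b : Fin d → ℝ) (S : Matrix (Fin d) (Fin d) ℝ) :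
    (mvGaussian d m S).map (· + b) = mvGaussian d (m + b) S := by
  have hcomp : (fun x => ENNReal.ofReal (mvGaussianPDFReal d m S x)) =
      (fun x => ENNReal.ofReal (mvGaussianPDFReal d (m + b) S x)) ∘ (· + b) := by
    ext x
    simp [mvGaussianPDFReal]
  rw [mvGaussian_eq_withDensity, hcomp, map_withDensity_comp _ (by fun_prop)
    (by fun_prop), map_add_right_eq_self, mvGaussian_eq_withDensity]

lemma mvGaussianPDFReal_mulVec {T : Matrix (Fin d) (Fin d) ℝ} (hT : T.det ≠ 0) (hS : 0 ≤ S.det)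
    (m x : Fin d → ℝ) :
    mvGaussianPDFReal d m S x =
      |T.det| * mvGaussianPDFReal d (T *ᵥ m) (T * S * Tᵀ) (T *ᵥ x) := by
  have hdet : (T * S * Tᵀ).det ^ (-(1 : ℝ) / 2) = |T.det|⁻¹ * S.det ^ (-(1 : ℝ) / 2) := by
    have hdet_mul : (T * S * Tᵀ).det = |T.det| ^ 2 * S.det := by
      rw [det_mul, det_mul, det_transpose, sq_abs]
      ring
    rw [hdet_mul, Real.mul_rpow (by positivity) hS, ← Real.rpow_natCast,
      ← Real.rpow_mul (abs_nonneg _), ← Real.rpow_neg_one]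
    norm_num
  have hquad : (T *ᵥ x - T *ᵥ m) ⬝ᵥ ((T * S * Tᵀ)⁻¹ *ᵥ (T *ᵥ x - T *ᵥ m)) =
      (x - m) ⬝ᵥ (S⁻¹ *ᵥ (x - m)) := by
    have hTunit : IsUnit T.det := hT.isUnit
    rw [← mulVec_sub, Matrix.mul_inv_rev, Matrix.mul_inv_rev, ← transpose_nonsing_inv,
      mulVec_mulVec, Matrix.mul_assoc, Matrix.mul_assoc, nonsing_inv_mul _ hTunit, Matrix.mul_one,
      ← mulVec_mulVec, mulVec_transpose, dotProduct_comm (T *ᵥ _), ← dotProduct_mulVec,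
      mulVec_mulVec, nonsing_inv_mul _ hTunit, one_mulVec, dotProduct_comm]
  have hT_abs : |T.det| ≠ 0 := abs_ne_zero.mpr hT
  simp only [mvGaussianPDFReal, hquad, hdet]
  field_simp

lemma map_mulVec_mvGaussian {T : Matrix (Fin d) (Fin d) ℝ} (hT : T.det ≠ 0) (hS : 0 ≤ S.det)
    (m : Fin d → ℝ) :
    (mvGaussian d m S).map (T *ᵥ ·) = mvGaussian d (T *ᵥ m) (T * S * Tᵀ) := by
  have hvol : (volume : Measure (Fin d → ℝ)).map (T *ᵥ ·) = ENNReal.ofReal |T.det⁻¹| • volume :=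
    Real.map_matrix_volume_pi_eq_smul_volume_pi hT
  set f : (Fin d → ℝ) → ENNReal := fun x =>
    ENNReal.ofReal (|T.det| * mvGaussianPDFReal d (T *ᵥ m) (T * S * Tᵀ) x)
  have hf : Measurable f := by fun_prop
  have hcomp : (fun x => ENNReal.ofReal (mvGaussianPDFReal d m S x)) = f ∘ (T *ᵥ ·) := by
    ext x
    rw [mvGaussianPDFReal_mulVec hT hS]
    rfl
  rw [mvGaussian_eq_withDensity, hcomp, map_withDensity_comp _ (by fun_prop) hf, hvol,
    withDensity_smul_measure, ← withDensity_smul _ hf, mvGaussian_eq_withDensity]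
  congr 1
  ext x
  rw [Pi.smul_apply, smul_eq_mul, ← ENNReal.ofReal_mul (abs_nonneg _), abs_inv,
    inv_mul_cancel_left₀ (abs_ne_zero.mpr hT)]

open scoped MatrixOrder in
lemma mvGaussian_eq_map_multivariateGaussian (m : Fin d → ℝ) (hS : S.PosDef) :
    mvGaussian d m S = (multivariateGaussian (WithLp.toLp 2 m) S).map WithLp.ofLp := by
  set T := CFC.sqrt S
  have hTT : T * T = S := CFC.sqrt_mul_sqrt_self S hS.posSemidef.nonneg
  have hT_symm : Tᵀ = T := by
    rw [← conjTranspose_eq_transpose_of_trivial]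
    exact (CFC.sqrt_nonneg S).isSelfAdjoint
  have hT_det : T.det ≠ 0 := fun h => hS.det_pos.ne' (by rw [← hTT, det_mul, h, zero_mul])
  calc mvGaussian d m S = ((mvGaussian d 0 1).map (T *ᵥ ·)).map (· + m) := by
        rw [map_mulVec_mvGaussian hT_det (by simp), map_add_right_mvGaussian, mulVec_zero, zero_add,
          Matrix.mul_one, hT_symm, hTT]
    _ = (multivariateGaussian (WithLp.toLp 2 m) S).map WithLp.ofLp := by
        rw [mvGaussian_zero_one, multivariateGaussian, ← map_pi_eq_stdGaussian,
          Measure.map_map (by fun_prop) (by fun_prop), Measure.map_map (by fun_prop) (by fun_prop),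
          Measure.map_map (by fun_prop) (by fun_prop)]
        congr 1
        ext1 u
        simp [T, add_comm]

lemma isGaussian_mvGaussian (m : Fin d → ℝ) (hS : S.PosDef) : IsGaussian (mvGaussian d m S) := by
  rw [mvGaussian_eq_map_multivariateGaussian m hS]
  exact isGaussian_map (EuclideanSpace.equiv (Fin d) ℝ).toContinuousLinearMap

lemma integral_id_mvGaussian (m : Fin d → ℝ) (hS : S.PosDef) :
    ∫ x, x ∂(mvGaussian d m S) = m := by
  rw [mvGaussian_eq_map_multivariateGaussian m hS]
  refine ((EuclideanSpace.equiv (Fin d) ℝ).toContinuousLinearMap.integral_id_map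
    IsGaussian.integrable_id).trans ?_
  rw [integral_id_multivariateGaussian]
  rfl

lemma covariance_eval_mvGaussian (m : Fin d → ℝ) (hS : S.PosDef) (i j : Fin d) :
    cov[fun x => x i, fun x => x j; mvGaussian d m S] = S i j := by
  rw [mvGaussian_eq_map_multivariateGaussian m hS,
    covariance_map_fun (Measurable.aestronglyMeasurable (by fun_prop))
      (Measurable.aestronglyMeasurable (by fun_prop)) (by fun_prop)]
  exact covariance_eval_multivariateGaussian hS.posSemidef i j

end mvGaussian

section CrossCovariance

variable {Ω : Type*} [MeasurableSpace Ω] {P : Measure Ω} {ι κ τ : Type*}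

/-- The cross-covariance matrix `Cov(X, Y)`, with entries `Cov(Xᵢ, Yⱼ)`, of two random vectors;
`crossCovariance X X P` is the covariance matrix of `X`. -/
noncomputable def crossCovariance (X : Ω → ι → ℝ) (Y : Ω → κ → ℝ) (P : Measure Ω) :
    Matrix ι κ ℝ :=
  .of fun i j => cov[fun ω => X ω i, fun ω => Y ω j; P]

lemma crossCovariance_apply (X : Ω → ι → ℝ) (Y : Ω → κ → ℝ) (P : Measure Ω) (i : ι) (j : κ) :
    crossCovariance X Y P i j = cov[fun ω => X ω i, fun ω => Y ω j; P] :=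
  rfl

lemma transpose_crossCovariance (X : Ω → ι → ℝ) (Y : Ω → κ → ℝ) (P : Measure Ω) :
    (crossCovariance X Y P)ᵀ = crossCovariance Y X P := by
  ext i j
  exact covariance_comm _ _

lemma covariance_eval_map {X : Ω → ι → ℝ} (hX : AEMeasurable X P) (i j : ι) :
    cov[fun x => x i, fun x => x j; P.map X] = crossCovariance X X P i j :=
  covariance_map_fun (measurable_pi_apply i).aestronglyMeasurable
    (measurable_pi_apply j).aestronglyMeasurable hX

lemma indepFun_of_crossCovariance_eq_zero [Finite ι] [Finite κ] {X : Ω → ι → ℝ} {Y : Ω → κ → ℝ}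
    (hXY : HasGaussianLaw (fun ω => (X ω, Y ω)) P) (hzero : crossCovariance X Y P = 0) :
    IndepFun X Y P := by
  have := Fintype.ofFinite ι
  have := Fintype.ofFinite κ
  exact HasGaussianLaw.indepFun_of_covariance_eval (X := fun i ω => X ω i)
    (Y := fun j ω => Y ω j) hXY fun i j => congrFun₂ hzero i j

section mvGaussian

variable {d : ℕ} {X : Ω → Fin d → ℝ} {m : Fin d → ℝ} {S : Matrix (Fin d) (Fin d) ℝ}

lemma hasGaussianLaw_of_map_eq_mvGaussian (hS : S.PosDef) (hX : P.map X = mvGaussian d m S) :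
    HasGaussianLaw X P where
  isGaussian_map := hX ▸ isGaussian_mvGaussian m hS

lemma integral_eq_of_map_eq_mvGaussian (hS : S.PosDef) (hX : P.map X = mvGaussian d m S) :
    ∫ ω, X ω ∂P = m := by
  have hX_meas := (hasGaussianLaw_of_map_eq_mvGaussian hS hX).aemeasurable
  rw [← integral_map hX_meas (f := fun x => x) (by fun_prop), hX, integral_id_mvGaussian m hS]

lemma crossCovariance_eq_of_map_eq_mvGaussian (hS : S.PosDef)
    (hX : P.map X = mvGaussian d m S) : crossCovariance X X P = S := by
  ext i j
  rw [← covariance_eval_map (hasGaussianLaw_of_map_eq_mvGaussian hS hX).aemeasurable, hX,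
    covariance_eval_mvGaussian m hS]

end mvGaussian

variable [Fintype ι] [Fintype κ]

lemma memLp_mulVec {X : Ω → ι → ℝ} (B : Matrix κ ι ℝ) (hX : MemLp X 2 P) :
    MemLp (fun ω => B *ᵥ X ω) 2 P :=
  B.mulVecLin.toContinuousLinearMap.comp_memLp' hX

lemma integral_mulVec {X : Ω → ι → ℝ} (B : Matrix κ ι ℝ) (hX : Integrable X P) :
    ∫ ω, B *ᵥ X ω ∂P = B *ᵥ ∫ ω, X ω ∂P :=
  B.mulVecLin.toContinuousLinearMap.integral_comp_comm hX

lemma crossCovariance_add_right [IsFiniteMeasure P] {X : Ω → ι → ℝ} {Y Z : Ω → κ → ℝ}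
    (hX : MemLp X 2 P) (hY : MemLp Y 2 P) (hZ : MemLp Z 2 P) :
    crossCovariance X (fun ω => Y ω + Z ω) P = crossCovariance X Y P + crossCovariance X Z P := by
  ext i j
  exact covariance_add_right (hX.eval i) (hY.eval j) (hZ.eval j)

lemma crossCovariance_sub_left [IsFiniteMeasure P] {X Y : Ω → ι → ℝ} {Z : Ω → κ → ℝ}
    (hX : MemLp X 2 P) (hY : MemLp Y 2 P) (hZ : MemLp Z 2 P) :
    crossCovariance (fun ω => X ω - Y ω) Z P = crossCovariance X Z P - crossCovariance Y Z P := by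
  ext i j
  exact covariance_sub_left (hX.eval i) (hY.eval i) (hZ.eval j)

lemma crossCovariance_mulVec_left [IsFiniteMeasure P] {X : Ω → ι → ℝ} {Y : Ω → κ → ℝ}
    (B : Matrix τ ι ℝ) (hX : MemLp X 2 P) (hY : MemLp Y 2 P) :
    crossCovariance (fun ω => B *ᵥ X ω) Y P = B * crossCovariance X Y P := by
  ext i j
  simp only [crossCovariance_apply, mul_apply, mulVec, dotProduct,
    covariance_fun_sum_left (fun k => (hX.eval k).const_mul (B i k)) (hY.eval j),
    covariance_const_mul_left]

lemma crossCovariance_mulVec_right [IsFiniteMeasure P] {X : Ω → ι → ℝ} {Y : Ω → κ → ℝ}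
    (B : Matrix τ κ ℝ) (hX : MemLp X 2 P) (hY : MemLp Y 2 P) :
    crossCovariance X (fun ω => B *ᵥ Y ω) P = crossCovariance X Y P * Bᵀ := by
  rw [← transpose_crossCovariance, crossCovariance_mulVec_left B hY hX, transpose_mul,
    transpose_crossCovariance]

lemma crossCovariance_eq_zero_of_indepFun {X : Ω → ι → ℝ} {Y : Ω → κ → ℝ}
    (hX : MemLp X 2 P) (hY : MemLp Y 2 P) (hXY : IndepFun X Y P) : crossCovariance X Y P = 0 := by
  ext i j
  exact (hXY.comp (measurable_pi_apply i) (measurable_pi_apply j)).covariance_eq_zero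
    (hX.eval i) (hY.eval j)

lemma map_eq_mvGaussian_of_hasGaussianLaw {d : ℕ} {X : Ω → Fin d → ℝ} (hX : HasGaussianLaw X P)
    (hcov : (crossCovariance X X P).PosDef) :
    P.map X = mvGaussian d (∫ ω, X ω ∂P) (crossCovariance X X P) := by
  have := hX.isGaussian_map
  have := isGaussian_mvGaussian (∫ ω, X ω ∂P) hcov
  refine gaussian_ext_of_covariance_eval ?_ fun i j => ?_
  · rw [integral_id_mvGaussian _ hcov, integral_map hX.aemeasurable (by fun_prop)]
  · rw [covariance_eval_mvGaussian _ hcov, covariance_eval_map hX.aemeasurable]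

end CrossCovariance

section KalmanGain

variable {m n : Type*} [Fintype m] [DecidableEq m] [Fintype n] [DecidableEq n]

section CommRing

variable {R : Type*} [CommRing R]

/-- The posterior precision matrix `Aᵀ Sy⁻¹ A + Sx⁻¹` of `x` given `A x + ε`, where `Sx` and `Sy`
are the covariance matrices of `x` and of the noise `ε`. -/
noncomputable def posteriorPrecision (Sx : Matrix n n R) (Sy : Matrix m m R) (A : Matrix m n R) :
    Matrix n n R :=
  Aᵀ * Sy⁻¹ * A + Sx⁻¹

/-- The Kalman gain of the linear model `y = A x + ε`, in information form: the matrix `D` for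
which `D y` is the best linear predictor of `x`. -/
noncomputable def kalmanGain (Sx : Matrix n n R) (Sy : Matrix m m R) (A : Matrix m n R) :
    Matrix n m R :=
  (posteriorPrecision Sx Sy A)⁻¹ * Aᵀ * Sy⁻¹

variable {Sx : Matrix n n R} {Sy : Matrix m m R} {A : Matrix m n R}

lemma sub_kalmanGain_mul_mul (hSx : IsUnit Sx.det) (hM : IsUnit (posteriorPrecision Sx Sy A).det) :
    Sx - kalmanGain Sx Sy A * (A * Sx) = (posteriorPrecision Sx Sy A)⁻¹ := by
  set M := posteriorPrecision Sx Sy A with hM_def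
  have hMSx : M * Sx = Aᵀ * Sy⁻¹ * A * Sx + 1 := by
    rw [hM_def, posteriorPrecision, Matrix.add_mul, nonsing_inv_mul _ hSx]
  calc Sx - kalmanGain Sx Sy A * (A * Sx)
      = M⁻¹ * (M * Sx) - M⁻¹ * (Aᵀ * Sy⁻¹ * A * Sx) := by
        rw [nonsing_inv_mul_cancel_left _ _ hM, kalmanGain]
        simp only [Matrix.mul_assoc, hM_def]
    _ = M⁻¹ := by rw [hMSx, Matrix.mul_add, add_sub_cancel_left, Matrix.mul_one]

lemma kalmanGain_mul_add (hSx : IsUnit Sx.det) (hSy : IsUnit Sy.det)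
    (hM : IsUnit (posteriorPrecision Sx Sy A).det) :
    kalmanGain Sx Sy A * (A * Sx * Aᵀ + Sy) = Sx * Aᵀ := by
  set M := posteriorPrecision Sx Sy A
  have hKA : kalmanGain Sx Sy A * (A * Sx) = Sx - M⁻¹ := by
    rw [← sub_kalmanGain_mul_mul hSx hM, sub_sub_cancel]
  calc kalmanGain Sx Sy A * (A * Sx * Aᵀ + Sy)
      = kalmanGain Sx Sy A * (A * Sx) * Aᵀ + kalmanGain Sx Sy A * Sy := by
        rw [Matrix.mul_add, Matrix.mul_assoc (kalmanGain Sx Sy A)]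
    _ = (Sx - M⁻¹) * Aᵀ + M⁻¹ * Aᵀ := by
        rw [hKA, kalmanGain, nonsing_inv_mul_cancel_right _ _ hSy]
    _ = Sx * Aᵀ := by rw [← Matrix.add_mul, sub_add_cancel]

end CommRing

lemma posDef_posteriorPrecision {Sx : Matrix n n ℝ} {Sy : Matrix m m ℝ} (A : Matrix m n ℝ)
    (hSx : Sx.PosDef) (hSy : Sy.PosDef) : (posteriorPrecision Sx Sy A).PosDef := by
  have hquad := hSy.inv.posSemidef.conjTranspose_mul_mul_same A
  rw [conjTranspose_eq_transpose_of_trivial] at hquad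
  exact PosDef.posSemidef_add hquad hSx.inv

end KalmanGain

section LinearPrediction

variable {Ω : Type*} [MeasurableSpace Ω] {P : Measure Ω} {ι κ : Type*}

lemma hasGaussianLaw_prodMk_mulVec_add [Fintype ι] [Finite κ] {X : Ω → ι → ℝ} {E : Ω → κ → ℝ}
    (A : Matrix κ ι ℝ) (hXE : HasGaussianLaw (fun ω => (X ω, E ω)) P) :
    HasGaussianLaw (fun ω => (X ω, A *ᵥ X ω + E ω)) P :=
  have := Fintype.ofFinite κ
  hXE.map_fun <| (ContinuousLinearMap.fst ℝ _ _).prod <|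
    A.mulVecLin.toContinuousLinearMap ∘L ContinuousLinearMap.fst ℝ _ _ +
      ContinuousLinearMap.snd ℝ _ _

lemma hasGaussianLaw_prodMk_sub_mulVec [Finite ι] [Fintype κ] {X : Ω → ι → ℝ} {Y : Ω → κ → ℝ}
    (D : Matrix ι κ ℝ) (hXY : HasGaussianLaw (fun ω => (X ω, Y ω)) P) :
    HasGaussianLaw (fun ω => (X ω - D *ᵥ Y ω, Y ω)) P :=
  have := Fintype.ofFinite ι
  hXY.map_fun <| (ContinuousLinearMap.fst ℝ _ _ -
    D.mulVecLin.toContinuousLinearMap ∘L ContinuousLinearMap.snd ℝ _ _).prod <|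
      ContinuousLinearMap.snd ℝ _ _

variable [Fintype ι] [Fintype κ] [IsFiniteMeasure P]

lemma crossCovariance_mulVec_add_right {X : Ω → ι → ℝ} {E : Ω → κ → ℝ} (A : Matrix κ ι ℝ)
    (hX : MemLp X 2 P) (hE : MemLp E 2 P) (hXE : IndepFun X E P) :
    crossCovariance X (fun ω => A *ᵥ X ω + E ω) P = crossCovariance X X P * Aᵀ := by
  rw [crossCovariance_add_right hX (memLp_mulVec A hX) hE, crossCovariance_mulVec_right A hX hX,
    crossCovariance_eq_zero_of_indepFun hX hE hXE, add_zero]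

lemma crossCovariance_mulVec_add_left {X : Ω → ι → ℝ} {E : Ω → κ → ℝ} (A : Matrix κ ι ℝ)
    (hX : MemLp X 2 P) (hE : MemLp E 2 P) (hXE : IndepFun X E P) :
    crossCovariance (fun ω => A *ᵥ X ω + E ω) X P = A * crossCovariance X X P := by
  rw [← transpose_crossCovariance, crossCovariance_mulVec_add_right A hX hE hXE, transpose_mul,
    transpose_crossCovariance, transpose_transpose]

lemma crossCovariance_mulVec_add_self {X : Ω → ι → ℝ} {E : Ω → κ → ℝ} (A : Matrix κ ι ℝ)
    (hX : MemLp X 2 P) (hE : MemLp E 2 P) (hXE : IndepFun X E P) :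
    crossCovariance (fun ω => A *ᵥ X ω + E ω) (fun ω => A *ᵥ X ω + E ω) P =
      A * crossCovariance X X P * Aᵀ + crossCovariance E E P := by
  set Y : Ω → κ → ℝ := fun ω => A *ᵥ X ω + E ω
  have hAX := memLp_mulVec A hX
  have hY : MemLp Y 2 P := hAX.add hE
  have hYE : crossCovariance Y E P = crossCovariance E E P := by
    rw [← transpose_crossCovariance, crossCovariance_add_right hE hAX hE,
      crossCovariance_mulVec_right A hE hX, crossCovariance_eq_zero_of_indepFun hE hX hXE.symm,
      Matrix.zero_mul, zero_add, transpose_crossCovariance]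
  rw [crossCovariance_add_right hY hAX hE, crossCovariance_mulVec_right A hY hX,
    crossCovariance_mulVec_add_left A hX hE hXE, hYE]

lemma crossCovariance_sub_mulVec_left {X : Ω → ι → ℝ} {Y : Ω → κ → ℝ} {τ : Type*} [Fintype τ]
    {Z : Ω → τ → ℝ} (D : Matrix ι κ ℝ) (hX : MemLp X 2 P) (hY : MemLp Y 2 P) (hZ : MemLp Z 2 P) :
    crossCovariance (fun ω => X ω - D *ᵥ Y ω) Z P =
      crossCovariance X Z P - D * crossCovariance Y Z P := by
  rw [crossCovariance_sub_left hX (memLp_mulVec D hY) hZ, crossCovariance_mulVec_left D hY hZ]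

lemma crossCovariance_sub_mulVec_eq_zero {X : Ω → ι → ℝ} {Y : Ω → κ → ℝ} {D : Matrix ι κ ℝ}
    (hX : MemLp X 2 P) (hY : MemLp Y 2 P)
    (hD : D * crossCovariance Y Y P = crossCovariance X Y P) :
    crossCovariance (fun ω => X ω - D *ᵥ Y ω) Y P = 0 := by
  rw [crossCovariance_sub_mulVec_left D hX hY hY, hD, sub_self]

lemma crossCovariance_sub_mulVec_self {X : Ω → ι → ℝ} {Y : Ω → κ → ℝ} {D : Matrix ι κ ℝ}
    (hX : MemLp X 2 P) (hY : MemLp Y 2 P)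
    (hD : D * crossCovariance Y Y P = crossCovariance X Y P) :
    crossCovariance (fun ω => X ω - D *ᵥ Y ω) (fun ω => X ω - D *ᵥ Y ω) P =
      crossCovariance X X P - D * crossCovariance Y X P := by
  set Z : Ω → ι → ℝ := fun ω => X ω - D *ᵥ Y ω
  have hZ : MemLp Z 2 P := hX.sub (memLp_mulVec D hY)
  have hYZ : crossCovariance Y Z P = 0 := by
    rw [← transpose_crossCovariance, crossCovariance_sub_mulVec_eq_zero hX hY hD, transpose_zero]
  have hZZ : crossCovariance Z Z P = crossCovariance X Z P := by
    rw [crossCovariance_sub_mulVec_left D hX hY hZ, hYZ, Matrix.mul_zero, sub_zero]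
  calc crossCovariance Z Z P = (crossCovariance Z Z P)ᵀ := (transpose_crossCovariance Z Z P).symm
    _ = crossCovariance Z X P := by rw [hZZ, transpose_crossCovariance]
    _ = crossCovariance X X P - D * crossCovariance Y X P :=
        crossCovariance_sub_mulVec_left D hX hY hX

end LinearPrediction

section Conditioning

variable {Ω α E F : Type*} [MeasurableSpace Ω] [MeasurableSpace α] [MeasurableSpace E]
  [MeasurableSpace F]

lemma kernel_id_prod_const_map_apply (ν : Measure E) [SFinite ν] {g : α × E → F}
    (hg : Measurable g) (a : α) :
    (Kernel.id ×ₖ Kernel.const α ν).map g a = ν.map fun z => g (a, z) := by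
  rw [Kernel.map_apply _ hg, Kernel.prod_apply, Kernel.id_apply, Kernel.const_apply,
    Measure.dirac_prod, Measure.map_map hg (by fun_prop)]
  rfl

lemma map_prodMk_fst_prod_eq_compProd (μ : Measure α) (ν : Measure E) [SFinite μ] [SFinite ν]
    {g : α × E → F} (hg : Measurable g) :
    (μ.prod ν).map (fun p => (p.1, g p)) = μ ⊗ₘ (Kernel.id ×ₖ Kernel.const α ν).map g := by
  have hpair : Measurable fun p : α × E => (p.1, g p) := by fun_prop
  ext s hs
  rw [Measure.map_apply hpair hs, Measure.prod_apply (hpair hs), Measure.compProd_apply hs]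
  refine lintegral_congr fun a => ?_
  rw [kernel_id_prod_const_map_apply ν hg,
    Measure.map_apply (by fun_prop) (measurable_prodMk_left hs)]
  rfl

variable {P : Measure Ω} [IsFiniteMeasure P]

lemma condDistrib_of_indepFun [StandardBorelSpace F] [Nonempty F] {Y : Ω → α} {Z : Ω → E}
    {g : α × E → F} (hY : Measurable Y) (hZ : Measurable Z) (hg : Measurable g)
    (hYZ : IndepFun Y Z P) :
    ∀ᵐ ω ∂P, condDistrib (fun ω => g (Y ω, Z ω)) Y P (Y ω) =
      (P.map Z).map fun z => g (Y ω, z) := by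
  have hpair : Measurable fun p : α × E => (p.1, g p) := by fun_prop
  have hjoint : P.map (fun ω => (Y ω, g (Y ω, Z ω))) =
      P.map Y ⊗ₘ (Kernel.id ×ₖ Kernel.const α (P.map Z)).map g := by
    rw [← map_prodMk_fst_prod_eq_compProd _ _ hg,
      ← (indepFun_iff_map_prod_eq_prod_map_map hY.aemeasurable hZ.aemeasurable).mp hYZ,
      Measure.map_map hpair (hY.prodMk hZ)]
    rfl
  filter_upwards [ae_of_ae_map hY.aemeasurable
    (condDistrib_ae_eq_of_measure_eq_compProd Y (by fun_prop) hjoint)] with ω hω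
  rw [hω, kernel_id_prod_const_map_apply _ hg]

variable {d : ℕ} {S : Matrix (Fin d) (Fin d) ℝ} {X : Ω → Fin d → ℝ} {Y : Ω → α}
  {f : α → Fin d → ℝ}

lemma condDistrib_eq_mvGaussian_of_indepFun_sub {m : Fin d → ℝ} (hX : Measurable X)
    (hY : Measurable Y) (hf : Measurable f) (hindep : IndepFun (fun ω => X ω - f (Y ω)) Y P)
    (hlaw : P.map (fun ω => X ω - f (Y ω)) = mvGaussian d m S) :
    ∀ᵐ ω ∂P, condDistrib X Y P (Y ω) = mvGaussian d (m + f (Y ω)) S := by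
  have hZ : Measurable fun ω => X ω - f (Y ω) := by fun_prop
  have hg : Measurable fun p : α × (Fin d → ℝ) => p.2 + f p.1 := by fun_prop
  simpa only [sub_add_cancel, hlaw, map_add_right_mvGaussian]
    using condDistrib_of_indepFun hY hZ hg hindep.symm

lemma condExp_eq_of_condDistrib_eq_mvGaussian (hX : Integrable X P) (hY : Measurable Y)
    (hS : S.PosDef) (hcond : ∀ᵐ ω ∂P, condDistrib X Y P (Y ω) = mvGaussian d (f (Y ω)) S) :
    P[X | MeasurableSpace.comap Y inferInstance] =ᵐ[P] fun ω => f (Y ω) := by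
  filter_upwards [condExp_ae_eq_integral_condDistrib' hY hX, hcond] with ω hmean hlaw
  rw [hmean, hlaw, integral_id_mvGaussian _ hS]

end Conditioning

section LinearModel

variable {Ω : Type*} [MeasurableSpace Ω] {P : Measure Ω}

section SecondOrder

variable [IsFiniteMeasure P] {ι κ : Type*} [Fintype ι] [DecidableEq ι] [Fintype κ] [DecidableEq κ]
  {Sx : Matrix ι ι ℝ} {Sy : Matrix κ κ ℝ} {A : Matrix κ ι ℝ} {x : Ω → ι → ℝ} {ε y : Ω → κ → ℝ}

lemma kalmanGain_mul_crossCovariance (hSx : Sx.PosDef) (hSy : Sy.PosDef) (hx : MemLp x 2 P)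
    (hε : MemLp ε 2 P) (hindep : IndepFun x ε P) (hxcov : crossCovariance x x P = Sx)
    (hεcov : crossCovariance ε ε P = Sy) (hy : y = fun ω => A *ᵥ x ω + ε ω) :
    kalmanGain Sx Sy A * crossCovariance y y P = crossCovariance x y P := by
  rw [hy, crossCovariance_mulVec_add_self A hx hε hindep,
    crossCovariance_mulVec_add_right A hx hε hindep, hxcov, hεcov,
    kalmanGain_mul_add hSx.det_pos.ne'.isUnit hSy.det_pos.ne'.isUnit
      (posDef_posteriorPrecision A hSx hSy).det_pos.ne'.isUnit]

lemma crossCovariance_sub_kalmanGain_mulVec_self (hSx : Sx.PosDef) (hSy : Sy.PosDef)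
    (hx : MemLp x 2 P) (hε : MemLp ε 2 P) (hindep : IndepFun x ε P)
    (hxcov : crossCovariance x x P = Sx) (hεcov : crossCovariance ε ε P = Sy)
    (hy : y = fun ω => A *ᵥ x ω + ε ω) :
    crossCovariance (fun ω => x ω - kalmanGain Sx Sy A *ᵥ y ω)
      (fun ω => x ω - kalmanGain Sx Sy A *ᵥ y ω) P = (posteriorPrecision Sx Sy A)⁻¹ := by
  have hyLp : MemLp y 2 P := hy ▸ (memLp_mulVec A hx).add hε
  have hyx : crossCovariance y x P = A * Sx := by
    rw [hy, crossCovariance_mulVec_add_left A hx hε hindep, hxcov]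
  rw [crossCovariance_sub_mulVec_self hx hyLp
      (kalmanGain_mul_crossCovariance hSx hSy hx hε hindep hxcov hεcov hy), hyx, hxcov,
    sub_kalmanGain_mul_mul hSx.det_pos.ne'.isUnit
      (posDef_posteriorPrecision A hSx hSy).det_pos.ne'.isUnit]

end SecondOrder

section Gaussian

variable {k d : ℕ} {Sx : Matrix (Fin d) (Fin d) ℝ} {Sy : Matrix (Fin k) (Fin k) ℝ}
  {A : Matrix (Fin k) (Fin d) ℝ} {mx : Fin d → ℝ} {mε : Fin k → ℝ} {x : Ω → Fin d → ℝ}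
  {ε y : Ω → Fin k → ℝ}

lemma hasGaussianLaw_prodMk_linearModel (hSx : Sx.PosDef) (hSy : Sy.PosDef)
    (hindep : IndepFun x ε P) (hxlaw : P.map x = mvGaussian d mx Sx)
    (hεlaw : P.map ε = mvGaussian k mε Sy) (hy : y = fun ω => A *ᵥ x ω + ε ω) :
    HasGaussianLaw (fun ω => (x ω, y ω)) P :=
  hy ▸ hasGaussianLaw_prodMk_mulVec_add A (hindep.hasGaussianLaw
    (hasGaussianLaw_of_map_eq_mvGaussian hSx hxlaw) (hasGaussianLaw_of_map_eq_mvGaussian hSy hεlaw))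

variable [IsFiniteMeasure P]

lemma indepFun_sub_kalmanGain_mulVec (hSx : Sx.PosDef) (hSy : Sy.PosDef)
    (hindep : IndepFun x ε P) (hxlaw : P.map x = mvGaussian d mx Sx)
    (hεlaw : P.map ε = mvGaussian k mε Sy) (hy : y = fun ω => A *ᵥ x ω + ε ω) :
    IndepFun (fun ω => x ω - kalmanGain Sx Sy A *ᵥ y ω) y P := by
  have hε := hasGaussianLaw_of_map_eq_mvGaussian hSy hεlaw
  have hxy := hasGaussianLaw_prodMk_linearModel hSx hSy hindep hxlaw hεlaw hy
  have hgain : kalmanGain Sx Sy A * crossCovariance y y P = crossCovariance x y P :=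
    kalmanGain_mul_crossCovariance hSx hSy hxy.fst.memLp_two hε.memLp_two hindep
      (crossCovariance_eq_of_map_eq_mvGaussian hSx hxlaw)
      (crossCovariance_eq_of_map_eq_mvGaussian hSy hεlaw) hy
  exact indepFun_of_crossCovariance_eq_zero (hasGaussianLaw_prodMk_sub_mulVec _ hxy)
    (crossCovariance_sub_mulVec_eq_zero hxy.fst.memLp_two hxy.snd.memLp_two hgain)

lemma map_sub_kalmanGain_mulVec (hSx : Sx.PosDef) (hSy : Sy.PosDef)
    (hindep : IndepFun x ε P) (hxlaw : P.map x = mvGaussian d mx Sx)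
    (hεlaw : P.map ε = mvGaussian k mε Sy) (hy : y = fun ω => A *ᵥ x ω + ε ω) :
    P.map (fun ω => x ω - kalmanGain Sx Sy A *ᵥ y ω) =
      mvGaussian d (mx - kalmanGain Sx Sy A *ᵥ (A *ᵥ mx + mε)) (posteriorPrecision Sx Sy A)⁻¹ := by
  set K := kalmanGain Sx Sy A
  have hε := hasGaussianLaw_of_map_eq_mvGaussian hSy hεlaw
  have hxy := hasGaussianLaw_prodMk_linearModel hSx hSy hindep hxlaw hεlaw hy
  have hx := hxy.fst
  have hymean : ∫ ω, y ω ∂P = A *ᵥ mx + mε := by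
    rw [hy, integral_add ((memLp_mulVec A hx.memLp_two).integrable one_le_two) hε.integrable,
      integral_mulVec A hx.integrable, integral_eq_of_map_eq_mvGaussian hSx hxlaw,
      integral_eq_of_map_eq_mvGaussian hSy hεlaw]
  have hmean : ∫ ω, (x ω - K *ᵥ y ω) ∂P = mx - K *ᵥ (A *ᵥ mx + mε) := by
    rw [integral_sub hx.integrable ((memLp_mulVec K hxy.snd.memLp_two).integrable one_le_two),
      integral_mulVec K hxy.snd.integrable, integral_eq_of_map_eq_mvGaussian hSx hxlaw, hymean]
  have hcov := crossCovariance_sub_kalmanGain_mulVec_self hSx hSy hx.memLp_two hε.memLp_two hindep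
    (crossCovariance_eq_of_map_eq_mvGaussian hSx hxlaw)
    (crossCovariance_eq_of_map_eq_mvGaussian hSy hεlaw) hy
  rw [map_eq_mvGaussian_of_hasGaussianLaw (hasGaussianLaw_prodMk_sub_mulVec K hxy).fst
    (hcov ▸ (posDef_posteriorPrecision A hSx hSy).inv), hmean, hcov]

end Gaussian

end LinearModel

theorem stmt4_general {k d : ℕ} {Ω : Type*} [MeasurableSpace Ω] (P : Measure Ω)
    [IsProbabilityMeasure P] (Sx : Matrix (Fin d) (Fin d) ℝ) (Sy : Matrix (Fin k) (Fin k) ℝ)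
    (A : Matrix (Fin k) (Fin d) ℝ) (hSx : Sx.PosDef) (hSy : Sy.PosDef)
    (x : Ω → Fin d → ℝ) (ε : Ω → Fin k → ℝ) (hx : Measurable x) (hε : Measurable ε)
    (hindep : IndepFun x ε P) (mx : Fin d → ℝ) (mε : Fin k → ℝ)
    (hxlaw : P.map x = mvGaussian d mx Sx) (hεlaw : P.map ε = mvGaussian k mε Sy)
    (y : Ω → Fin k → ℝ) (hy : y = fun ω => A *ᵥ x ω + ε ω)
    (D : Matrix (Fin d) (Fin k) ℝ) (hD : D = (Aᵀ * Sy⁻¹ * A + Sx⁻¹)⁻¹ * Aᵀ * Sy⁻¹) :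
    IndepFun (fun ω => x ω - D *ᵥ y ω) y P ∧
    P.map (fun ω => x ω - D *ᵥ y ω) =
      mvGaussian d (mx - D *ᵥ (A *ᵥ mx + mε)) (Aᵀ * Sy⁻¹ * A + Sx⁻¹)⁻¹ ∧
    (∀ᵐ ω ∂P, condDistrib x y P (y ω) =
      mvGaussian d (mx + D *ᵥ (y ω - (A *ᵥ mx + mε))) (Aᵀ * Sy⁻¹ * A + Sx⁻¹)⁻¹) ∧
    P[x | MeasurableSpace.comap y inferInstance] =ᵐ[P]
      fun ω => mx + D *ᵥ (y ω - (A *ᵥ mx + mε)) := by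
  have hy_meas : Measurable y := by rw [hy]; fun_prop
  have hind : IndepFun (fun ω => x ω - D *ᵥ y ω) y P :=
    hD ▸ indepFun_sub_kalmanGain_mulVec hSx hSy hindep hxlaw hεlaw hy
  have hlaw : P.map (fun ω => x ω - D *ᵥ y ω) =
      mvGaussian d (mx - D *ᵥ (A *ᵥ mx + mε)) (posteriorPrecision Sx Sy A)⁻¹ :=
    hD ▸ map_sub_kalmanGain_mulVec hSx hSy hindep hxlaw hεlaw hy
  have hcond : ∀ᵐ ω ∂P, condDistrib x y P (y ω) =
      mvGaussian d (mx + D *ᵥ (y ω - (A *ᵥ mx + mε))) (posteriorPrecision Sx Sy A)⁻¹ := by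
    simpa only [mulVec_sub, add_sub, sub_add_eq_add_sub] using
      condDistrib_eq_mvGaussian_of_indepFun_sub hx hy_meas (measurable_mulVec D) hind hlaw
  have hxint : Integrable x P := (hasGaussianLaw_of_map_eq_mvGaussian hSx hxlaw).integrable
  exact ⟨hind, hlaw, hcond, condExp_eq_of_condDistrib_eq_mvGaussian hxint hy_meas
    (f := fun v => mx + D *ᵥ (v - (A *ᵥ mx + mε))) (posDef_posteriorPrecision A hSx hSy).inv hcond⟩

/-- Let `x ~ N(0, Sx)` and `ε ~ N(0, Sy)` be independent on `ℝ^d`, with `Sx, Sy`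
positive definite, `A : ℝ^{d×d}`, `y = A x + ε`, and `D = (Aᵀ Sy⁻¹ A + Sx⁻¹)⁻¹ Aᵀ Sy⁻¹`.
Then `x − D y` is independent of `y` with law `N(0, (Aᵀ Sy⁻¹ A + Sx⁻¹)⁻¹)`; consequently the
conditional distribution of `x` given `y` is `N(D y, (Aᵀ Sy⁻¹ A + Sx⁻¹)⁻¹)` and in particular
`E[x | y] = D y` almost surely. -/
theorem stmt4 {d : ℕ} {Ω : Type*} [MeasurableSpace Ω] (P : Measure Ω) [IsProbabilityMeasure P]
    (Sx Sy A : Matrix (Fin d) (Fin d) ℝ) (hSx : Sx.PosDef) (hSy : Sy.PosDef)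
    (x ε : Ω → Fin d → ℝ) (hx : Measurable x) (hε : Measurable ε)
    (hindep : IndepFun x ε P)
    (hxlaw : P.map x = mvGaussian d 0 Sx) (hεlaw : P.map ε = mvGaussian d 0 Sy)
    (y : Ω → Fin d → ℝ) (hy : y = fun ω => A *ᵥ x ω + ε ω)
    (D : Matrix (Fin d) (Fin d) ℝ) (hD : D = (Aᵀ * Sy⁻¹ * A + Sx⁻¹)⁻¹ * Aᵀ * Sy⁻¹) :
    IndepFun (fun ω => x ω - D *ᵥ y ω) y P ∧
    P.map (fun ω => x ω - D *ᵥ y ω) = mvGaussian d 0 (Aᵀ * Sy⁻¹ * A + Sx⁻¹)⁻¹ ∧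
    (∀ᵐ ω ∂P, condDistrib x y P (y ω)
      = mvGaussian d (D *ᵥ y ω) (Aᵀ * Sy⁻¹ * A + Sx⁻¹)⁻¹) ∧
    P[x | MeasurableSpace.comap y inferInstance] =ᵐ[P] (fun ω => D *ᵥ y ω) := by
  simpa only [mulVec_zero, add_zero, sub_zero, zero_add] using
    stmt4_general P Sx Sy A hSx hSy x ε hx hε hindep 0 0 hxlaw hεlaw y hy D hD
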